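/- Let P and Q be complex polynomials with P nonconstant, regarded as elements of ℂ(z) = RatFunc ℂ, and suppose that the intermediate field ℂ(P,Q) generated by P and Q over ℂ is a proper subfield of ℂ(z). Then there exists a complex polynomial W with deg W ≥ 2 such that ℂ(P,Q) = ℂ(W); in particular there exist complex polynomials P̃ and Q̃ such that P = P̃ ∘ W and Q = Q̃ ∘ W, where P̃ and Q̃ have no common right divisor of degree at least 2 in the composition algebra. -/

import Mathlib

open Polynomial IntermediateField

lemma aux_comp_mem (P W : ℂ[X]) :
    algebraMap ℂ[X] (RatFunc ℂ) (P.comp W) = aeval (algebraMap ℂ[X] (RatFunc ℂ) W) P := by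
  rw [aeval_algebraMap_apply, ← comp_eq_aeval]

lemma aux_adjoin_comp_mem (P W : ℂ[X]) :
    algebraMap ℂ[X] (RatFunc ℂ) (P.comp W) ∈ ℂ⟮algebraMap ℂ[X] (RatFunc ℂ) W⟯ := by
  rw [mem_adjoin_simple_iff]
  exact ⟨P, 1, by simp [aux_comp_mem]⟩

lemma aux_finrank (W : ℂ[X]) :
    Module.finrank ℂ⟮algebraMap ℂ[X] (RatFunc ℂ) W⟯ (RatFunc ℂ) = W.natDegree := by
  rw [RatFunc.finrank_eq_max_natDegree]; simp

lemma aux_exists_comp (P W : ℂ[X]) (hW : 1 ≤ W.natDegree)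
    (h : algebraMap ℂ[X] (RatFunc ℂ) P ∈ ℂ⟮algebraMap ℂ[X] (RatFunc ℂ) W⟯) :
    ∃ A : ℂ[X], P = A.comp W := by
  by_cases hP0 : P = 0
  · exact ⟨0, by simp [hP0]⟩
  obtain ⟨a, b, hab⟩ := (mem_adjoin_simple_iff _ _).1 h
  rw [← aux_comp_mem, ← aux_comp_mem] at hab
  have hb : b.comp W ≠ 0 := by
    intro hb
    rw [hb] at hab
    simp [hP0] at hab
  have hb0 : b ≠ 0 := by rintro rfl; simp at hb
  rw [eq_div_iff (RatFunc.algebraMap_ne_zero hb), ← map_mul] at hab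
  have hab := RatFunc.algebraMap_injective _ hab
  have hd := EuclideanDomain.mod_add_div a b
  have h1 : (a % b).comp W = (P - (a / b).comp W) * b.comp W := by
    have hd' := congrArg (fun p => p.comp W) hd
    simp only [add_comp, mul_comp] at hd'
    rw [sub_mul, hab, ← hd']
    ring
  refine ⟨a / b, ?_⟩
  by_contra hne
  have hne' : P - (a / b).comp W ≠ 0 := sub_ne_zero.2 hne
  have h2 := congrArg natDegree h1
  rw [natDegree_mul hne' hb, natDegree_comp, natDegree_comp] at h2
  have hr : a % b ≠ 0 := by
    intro hr
    rw [hr, zero_comp] at h1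
    exact mul_ne_zero hne' hb h1.symm
  have h3 : (a % b).natDegree < b.natDegree :=
    natDegree_lt_natDegree hr (EuclideanDomain.mod_lt a hb0)
  nlinarith

lemma aux_generator (E : IntermediateField ℂ (RatFunc ℂ)) (hE : E ≠ ⊥) :
    ∃ g : RatFunc ℂ, E = ℂ⟮g⟯ ∧ 0 < g.intDegree := by
  obtain ⟨g, hg, hgC⟩ : ∃ g : RatFunc ℂ, E = ℂ⟮g⟯ ∧ ¬ ∃ c, g = RatFunc.C c :=
    ⟨_, RatFunc.Luroth.eq_adjoin_generator, RatFunc.Luroth.generator_ne_C hE⟩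
  have key : ∀ g : RatFunc ℂ, E = ℂ⟮g⟯ → g.intDegree < 0 →
      ∃ g : RatFunc ℂ, E = ℂ⟮g⟯ ∧ 0 < g.intDegree := by
    intro g hg h
    refine ⟨g⁻¹, ?_, by rw [RatFunc.intDegree_inv]; omega⟩
    rw [hg]
    apply le_antisymm <;> rw [adjoin_simple_le_iff]
    · have := inv_mem (mem_adjoin_simple_self ℂ g⁻¹)
      rwa [inv_inv] at this
    · exact inv_mem (mem_adjoin_simple_self ℂ g)
  rcases lt_trichotomy g.intDegree 0 with h | h | h
  · exact key g hg h
  · set c := g.num.leadingCoeff with hc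
    have hg0 : g ≠ 0 := fun h0 => hgC ⟨0, by simp [h0]⟩
    have hdeg : g.num.natDegree = g.denom.natDegree := by
      unfold RatFunc.intDegree at h; omega
    have hne : g - RatFunc.C c ≠ 0 := fun h0 => hgC ⟨c, sub_eq_zero.1 h0⟩
    apply key (g - RatFunc.C c)
    · rw [hg]
      apply le_antisymm <;> rw [adjoin_simple_le_iff]
      · have := add_mem (mem_adjoin_simple_self ℂ (g - RatFunc.C c))
          (_root_.algebraMap_mem ℂ⟮g - RatFunc.C c⟯ c)
        simpa using this
      · exact sub_mem (mem_adjoin_simple_self ℂ g) (_root_.algebraMap_mem ℂ⟮g⟯ c)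
    · have heq : g - RatFunc.C c = algebraMap ℂ[X] (RatFunc ℂ) (g.num - C c * g.denom) /
          algebraMap ℂ[X] (RatFunc ℂ) g.denom := by
        rw [eq_div_iff (RatFunc.algebraMap_ne_zero g.denom_ne_zero)]
        have h1 := RatFunc.num_div_denom g
        rw [div_eq_iff (RatFunc.algebraMap_ne_zero g.denom_ne_zero)] at h1
        rw [map_sub, map_mul, h1, RatFunc.algebraMap_C]
        ring
      have hn0 : g.num - C c * g.denom ≠ 0 := by
        intro h0
        rw [h0] at heq
        exact hne (by simpa using heq)
      rw [heq, RatFunc.intDegree_div (RatFunc.algebraMap_ne_zero hn0)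
        (RatFunc.algebraMap_ne_zero g.denom_ne_zero), RatFunc.intDegree_polynomial,
        RatFunc.intDegree_polynomial, ← hdeg]
      have hc0 : c ≠ 0 := leadingCoeff_ne_zero.2 (RatFunc.num_ne_zero hg0)
      have := natDegree_lt_natDegree hn0 (degree_sub_lt_left (p := g.num) (q := C c * g.denom) (by
          rw [degree_C_mul hc0, degree_eq_natDegree (RatFunc.num_ne_zero hg0),
            degree_eq_natDegree g.denom_ne_zero, hdeg]) (RatFunc.num_ne_zero hg0)
          (by simp [g.monic_denom.leadingCoeff, hc]))
      omega
  · exact ⟨g, hg, h⟩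

lemma aux_poly (P : ℂ[X]) (hP : 1 ≤ P.natDegree) (g : RatFunc ℂ) (hg : 0 < g.intDegree)
    (h : algebraMap ℂ[X] (RatFunc ℂ) P ∈ ℂ⟮g⟯) :
    ∃ W : ℂ[X], g = algebraMap ℂ[X] (RatFunc ℂ) W := by
  classical
  have hP0 : P ≠ 0 := by rintro rfl; simp at hP
  have hg0 : g ≠ 0 := by rintro rfl; simp at hg
  obtain ⟨a, b, hab⟩ := (mem_adjoin_simple_iff _ _).1 h
  have hb : aeval g b ≠ 0 := by
    intro hb
    rw [hb] at hab
    simp [hP0] at hab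
  have hb0 : b ≠ 0 := by rintro rfl; simp at hb
  rw [eq_div_iff hb] at hab
  have ha0 : a ≠ 0 := by
    rintro rfl
    simp [hP0, hb] at hab
  have hv : 1 < RatFunc.inftyValuation ℂ g := by
    rw [RatFunc.inftyValuation_apply, RatFunc.inftyValuation_of_nonzero _ hg0]
    rw [← WithZero.exp_zero, WithZero.exp_lt_exp]; exact hg
  have key := congrArg (RatFunc.inftyValuation ℂ) hab
  rw [map_mul, valuation_aeval_eq_valuation_X_pow_natDegree_of_one_lt_valuation_X _ hv hb0,
    valuation_aeval_eq_valuation_X_pow_natDegree_of_one_lt_valuation_X _ hv ha0,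
    RatFunc.inftyValuation_apply, RatFunc.inftyValuation.polynomial _ hP0] at key
  have hlt : b.natDegree < a.natDegree := by
    rw [← pow_lt_pow_iff_right₀ hv, ← key]
    have h1 : 1 < WithZero.exp (P.natDegree : ℤ) := by
      rw [← WithZero.exp_zero, WithZero.exp_lt_exp]; omega
    exact lt_mul_of_one_lt_left (pow_pos (zero_lt_one.trans hv) _) h1
  have hint : IsIntegral ℂ[X] g := by
    have hm : (C (C a.leadingCoeff⁻¹) * (a.map C - C P * b.map C)).Monic := by
      apply monic_of_natDegree_le_of_coeff_eq_one a.natDegree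
      · refine (natDegree_C_mul_le _ _).trans ((natDegree_sub_le _ _).trans (max_le ?_ ?_))
        · exact natDegree_map_le
        · exact (natDegree_C_mul_le _ _).trans (natDegree_map_le.trans hlt.le)
      · rw [coeff_C_mul, coeff_sub, coeff_C_mul, coeff_map, coeff_map,
          coeff_eq_zero_of_natDegree_lt hlt, map_zero, mul_zero, sub_zero, coeff_natDegree, ← C_mul,
          inv_mul_cancel₀ (leadingCoeff_ne_zero.2 ha0), C_1]
    refine ⟨_, hm, ?_⟩
    have hmap : ∀ p : ℂ[X], eval₂ (algebraMap ℂ[X] (RatFunc ℂ)) g (p.map C) = aeval g p := by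
      intro p
      rw [eval₂_map]
      rfl
    rw [eval₂_mul, eval₂_sub, eval₂_mul, hmap, hmap, eval₂_C, eval₂_C, hab, sub_self, mul_zero]
  obtain ⟨W, hW⟩ := IsIntegrallyClosed.isIntegral_iff.1 hint
  exact ⟨W, hW.symm⟩

theorem adjoin_pair_eq_adjoin_polynomial
    (P Q : ℂ[X]) (hP : 1 ≤ P.natDegree)
    (h : IntermediateField.adjoin ℂ
        ({algebraMap ℂ[X] (RatFunc ℂ) P, algebraMap ℂ[X] (RatFunc ℂ) Q} : Set (RatFunc ℂ)) ≠ ⊤) :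
    ∃ W : ℂ[X], 2 ≤ W.natDegree ∧
      IntermediateField.adjoin ℂ
          ({algebraMap ℂ[X] (RatFunc ℂ) P, algebraMap ℂ[X] (RatFunc ℂ) Q} : Set (RatFunc ℂ)) =
        IntermediateField.adjoin ℂ ({algebraMap ℂ[X] (RatFunc ℂ) W} : Set (RatFunc ℂ)) ∧
      ∃ Pt Qt : ℂ[X], P = Pt.comp W ∧ Q = Qt.comp W ∧
        ¬ ∃ A B V : ℂ[X], 2 ≤ V.natDegree ∧ Pt = A.comp V ∧ Qt = B.comp V := by
  set E := IntermediateField.adjoin ℂ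
        ({algebraMap ℂ[X] (RatFunc ℂ) P, algebraMap ℂ[X] (RatFunc ℂ) Q} : Set (RatFunc ℂ)) with hEdef
  have hPE : algebraMap ℂ[X] (RatFunc ℂ) P ∈ E := subset_adjoin _ _ (by simp)
  have hQE : algebraMap ℂ[X] (RatFunc ℂ) Q ∈ E := subset_adjoin _ _ (by simp)
  have hE : E ≠ ⊥ := by
    intro hb
    rw [hb, mem_bot] at hPE
    obtain ⟨c, hc⟩ := hPE
    have : P = C c := by
      apply RatFunc.algebraMap_injective
      rw [← hc]; simp
    rw [this] at hP
    simp at hP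
  obtain ⟨g, hg, hgd⟩ := aux_generator E hE
  obtain ⟨W, rfl⟩ := aux_poly P hP g hgd (hg ▸ hPE)
  have hW1 : 1 ≤ W.natDegree := by
    rw [RatFunc.intDegree_polynomial] at hgd; omega
  have hW2 : 2 ≤ W.natDegree := by
    by_contra hlt
    have h1 : W.natDegree = 1 := by omega
    rw [← aux_finrank, finrank_eq_one_iff_eq_top] at h1
    exact h (hg.trans h1)
  obtain ⟨Pt, hPt⟩ := aux_exists_comp P W hW1 (hg ▸ hPE)
  obtain ⟨Qt, hQt⟩ := aux_exists_comp Q W hW1 (hg ▸ hQE)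
  refine ⟨W, hW2, hg, Pt, Qt, hPt, hQt, ?_⟩
  rintro ⟨A, B, V, hV, rfl, rfl⟩
  rw [comp_assoc] at hPt hQt
  have h1 : E = ℂ⟮algebraMap ℂ[X] (RatFunc ℂ) (V.comp W)⟯ := by
    apply le_antisymm
    · rw [hEdef, adjoin_le_iff]
      rintro x (rfl | rfl)
      · rw [hPt]; exact aux_adjoin_comp_mem _ _
      · rw [hQt]; exact aux_adjoin_comp_mem _ _
    · rw [adjoin_simple_le_iff, hg]; exact aux_adjoin_comp_mem _ _
  have h2 := aux_finrank (V.comp W)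
  rw [← h1, hg, aux_finrank, natDegree_comp] at h2
  nlinarith
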